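/- Let p > 2 and let (w_m)_{m∈ℕ} be a sequence in (0,1] with w_m → 0, and for each n ∈ ℕ let Y_n be the corresponding space on (ℕ×ℕ)^n. Let Z = (Σ_n Y_n)_{ℓ_p} be the space of all sequences (x^{(n)})_{n∈ℕ} with x^{(n)} ∈ Y_n and norm ‖(x^{(n)})‖ = (Σ_n ‖x^{(n)}‖_{Y_n}^p)^{1/p} < ∞. Then Z is not isomorphic to a subspace of L_p[0,1]: there exist no bounded linear map T : Z → L_p([0,1]) and constant c > 0 with ‖Tx‖_{L_p} ≥ c‖x‖_Z for all x ∈ Z. -/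

import Mathlib

open scoped ENNReal
open MeasureTheory Filter

noncomputable section

variable {α : Type*}

/-- `P` is a partition of the type `α`: a collection of pairwise disjoint
nonempty subsets of `α` whose union is all of `α`. -/
def IsPartition (P : Set (Set α)) : Prop :=
  (∀ N ∈ P, N.Nonempty) ∧ P.PairwiseDisjoint id ∧ ⋃₀ P = Set.univ

/-- A weight function takes values in `(0,1]`. -/
def IsWeight (W : α → ℝ) : Prop := ∀ a, W a ∈ Set.Ioc (0 : ℝ) 1

/-- `‖x‖_{P,W} = (Σ_{N∈P} (Σ_{j∈N} x_j² w_j²)^{p/2})^{1/p}`, valued in `[0,∞]`. -/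
def pwNorm (p : ℝ) (P : Set (Set α)) (W : α → ℝ) (x : α → ℝ) : ℝ≥0∞ :=
  (∑' N : P, (∑' j : N.1, ENNReal.ofReal ((x j.1) ^ 2 * (W j.1) ^ 2)) ^ (p / 2)) ^ (1 / p)

/-- A partition–weight pair on `α`. -/
abbrev PWPair (α : Type*) := Set (Set α) × (α → ℝ)

/-- Every member of the family is a genuine partition–weight pair. -/
def IsPWFamily (𝒞 : Set (PWPair α)) : Prop :=
  ∀ PW ∈ 𝒞, IsPartition PW.1 ∧ IsWeight PW.2

/-- `‖x‖_𝒞 = sup_{(P,W) ∈ 𝒞} ‖x‖_{P,W}`. -/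
def famNorm (p : ℝ) (𝒞 : Set (PWPair α)) (x : α → ℝ) : ℝ≥0∞ :=
  ⨆ PW ∈ 𝒞, pwNorm p PW.1 PW.2 x

/-- The index set `(ℕ×ℕ)^n`. -/
abbrev BIdx (n : ℕ) := Fin n → ℕ × ℕ

/-- The partition `P_I` of `(ℕ×ℕ)^n` into the sets obtained by fixing the coordinates
`i_k` for `k ∈ I` and letting the others range over all of `ℕ × ℕ`. -/
def PI {n : ℕ} (I : Finset (Fin n)) : Set (Set (BIdx n)) :=
  {S | ∃ g : Fin n → ℕ × ℕ, S = {i : BIdx n | ∀ k ∈ I, i k = g k}}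

/-- The weight `W_I(i) = Π_{k∉I} w_{i_k}`, where `w_{(m,l)} = w_m`. -/
def WI (w : ℕ → ℝ) {n : ℕ} (I : Finset (Fin n)) : BIdx n → ℝ :=
  fun i => ∏ k ∈ Iᶜ, w (i k).1

/-- The family of partition–weight pairs `{(P_I, W_I) : I ⊆ {1,…,n}}` defining `Y_n`. -/
def famYn (w : ℕ → ℝ) (n : ℕ) : Set (PWPair (BIdx n)) :=
  Set.range fun I : Finset (Fin n) => (PI I, WI w I)

/-- The norm of `Y_n`:  `max_{I ⊆ {1,…,n}} ‖x‖_{P_I,W_I}`. -/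
def Ynorm (p : ℝ) (w : ℕ → ℝ) (n : ℕ) (x : BIdx n → ℝ) : ℝ≥0∞ :=
  famNorm p (famYn w n) x

/-- The norm of the `ℓ_p`-sum `Z = (Σ_n Y_n)_{ℓ_p}`. -/
def Znorm (p : ℝ) (w : ℕ → ℝ) (x : ∀ n : ℕ, BIdx n → ℝ) : ℝ≥0∞ :=
  (∑' n : ℕ, (Ynorm p w n (x n)) ^ p) ^ (1 / p)

/-!
Fix `m` with `w_m` small and consider, on the `k`-th coordinate axis of `(ℕ×ℕ)^n` through the point
`((m,0),…,(m,0))`, the vector taking the value `a` at `N` points, where `√N * a * w_m = 1` and `N`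
is so large that `N^(1/p) * a` is small; this is possible because `p > 2`. Such a vector has norm
`1` for the set `I` with complement `{k}`. For every other `I` its norm is small: if `k ∈ I` it
meets each cell of `P_I` at most once and one sees its `ℓ_p` norm, and otherwise the weight `W_I`
contributes a second factor `w_m`. Hence for each `I` at most one of the `n` axis vectors
is large, so together they span a copy of `ℓ_∞^n` in `Y_n`, with constants independent of `n`. By
Clarkson's inequality, `f_1, …, f_n ∈ L_p` with `‖f_k‖ ≥ c` have a signed sum of norm at least
`c * n^(1/p)`, so `L_p` does not contain the spaces `ℓ_∞^n` uniformly.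
-/

section OrliczProperty

open scoped NNReal

/-- The Orlicz property of exponent `q` of a normed space, i.e. the identity is `(q,1)`-summing. It
is the consequence of finite cotype used to exclude copies of `ℓ_∞^n`, and asks for one good choice
of signs instead of an average over all of them. -/
def HasOrliczProperty (E : Type*) [SeminormedAddCommGroup E] [NormedSpace ℝ E] (q : ℝ) : Prop :=
  ∃ K : ℝ≥0, ∀ (n : ℕ) (f : Fin n → E), ∃ ε : Fin n → ℝ, (∀ k, |ε k| = 1) ∧
    ∑ k, ‖f k‖ ^ q ≤ (K * ‖∑ k, ε k • f k‖) ^ q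

variable {V : Type*} [AddCommGroup V] [Module ℝ V]

/-- The `[0,∞]`-valued norm `N` admits uniformly isomorphic copies of all the spaces `ℓ_∞^n`, given
by their unit vectors. -/
def ContainsLinftyUniformly (N : V → ℝ≥0∞) : Prop :=
  ∃ C : ℝ≥0, ∀ n : ℕ, ∃ x : Fin n → V, (∀ k, 1 ≤ N (x k)) ∧
    ∀ a : Fin n → ℝ, (∀ k, |a k| ≤ 1) → N (∑ k, a k • x k) ≤ C

variable {E : Type*} [SeminormedAddCommGroup E] [NormedSpace ℝ E]

/-- `T` is a linear map, bounded by `M` and bounded below by `c > 0`, from the space of vectors of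
finite norm `N` to `E`. The values of `T` at vectors of infinite norm are irrelevant. -/
structure IsNormEmbedding (N : V → ℝ≥0∞) (T : V → E) (M c : ℝ) : Prop where
  pos : 0 < c
  map_add : ∀ x y, N x < ⊤ → N y < ⊤ → T (x + y) = T x + T y
  map_smul : ∀ (r : ℝ) (x), N x < ⊤ → T (r • x) = r • T x
  upper_bound : ∀ x, N x < ⊤ → ENNReal.ofReal ‖T x‖ ≤ ENNReal.ofReal M * N x
  lower_bound : ∀ x, N x < ⊤ → ENNReal.ofReal c * N x ≤ ENNReal.ofReal ‖T x‖

theorem norm_sum_smul_le_of_forall_abs_le_one {N : V → ℝ≥0∞} {n : ℕ} {x : Fin n → V} {C : ℝ≥0∞}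
    (hx : ∀ a : Fin n → ℝ, (∀ k, |a k| ≤ 1) → N (∑ k, a k • x k) ≤ C) {a : Fin n → ℝ}
    (ha : ∀ k, |a k| ≤ 1) (s : Finset (Fin n)) : N (∑ k ∈ s, a k • x k) ≤ C := by
  have h := hx (fun k => if k ∈ s then a k else 0) fun k => by split_ifs <;> simp [ha k]
  simpa only [ite_smul, zero_smul, Finset.sum_ite_mem, Finset.univ_inter] using h

theorem norm_le_of_forall_abs_le_one {N : V → ℝ≥0∞} {n : ℕ} {x : Fin n → V} {C : ℝ≥0∞}
    (hx : ∀ a : Fin n → ℝ, (∀ k, |a k| ≤ 1) → N (∑ k, a k • x k) ≤ C) (k : Fin n) :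
    N (x k) ≤ C := by
  simpa using norm_sum_smul_le_of_forall_abs_le_one hx (a := fun _ => 1) (by simp) {k}

namespace IsNormEmbedding

variable {N : V → ℝ≥0∞} {T : V → E} {M c : ℝ}

theorem map_sum (hT : IsNormEmbedding N T M c) {ι : Type*} {y : ι → V}
    (hy : ∀ s : Finset ι, N (∑ k ∈ s, y k) < ⊤) (s : Finset ι) :
    T (∑ k ∈ s, y k) = ∑ k ∈ s, T (y k) := by
  classical
  induction s using Finset.induction_on with
  | empty => simpa using hT.map_smul 0 0 (by simpa using hy ∅)
  | insert j s hj ih =>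
    rw [Finset.sum_insert hj, Finset.sum_insert hj,
      hT.map_add _ _ (by simpa using hy {j}) (hy s), ih]

theorem map_sum_smul (hT : IsNormEmbedding N T M c) {n : ℕ} {x : Fin n → V} {C : ℝ≥0}
    (hx : ∀ a : Fin n → ℝ, (∀ k, |a k| ≤ 1) → N (∑ k, a k • x k) ≤ C) {a : Fin n → ℝ}
    (ha : ∀ k, |a k| ≤ 1) : T (∑ k, a k • x k) = ∑ k, a k • T (x k) := by
  rw [hT.map_sum fun s =>
    (norm_sum_smul_le_of_forall_abs_le_one hx ha s).trans_lt ENNReal.coe_lt_top]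
  exact Finset.sum_congr rfl fun k _ =>
    hT.map_smul _ _ ((norm_le_of_forall_abs_le_one hx k).trans_lt ENNReal.coe_lt_top)

theorem norm_apply_le (hT : IsNormEmbedding N T M c) {x : V} {C : ℝ≥0} (hx : N x ≤ C) :
    ‖T x‖ ≤ M.toNNReal * C := by
  have h := (hT.upper_bound x (hx.trans_lt ENNReal.coe_lt_top)).trans (mul_le_mul_right hx _)
  rw [ofReal_norm, ENNReal.ofReal, ← ENNReal.coe_mul, enorm_le_coe] at h
  exact_mod_cast h

theorem le_norm_apply (hT : IsNormEmbedding N T M c) {x : V} (hx : N x < ⊤) (hx1 : 1 ≤ N x) :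
    c ≤ ‖T x‖ :=
  (ENNReal.ofReal_le_ofReal_iff (norm_nonneg _)).1 <|
    (le_mul_of_one_le_right' hx1).trans (hT.lower_bound x hx)

end IsNormEmbedding

theorem HasOrliczProperty.not_isNormEmbedding {q : ℝ} (hE : HasOrliczProperty E q) (hq : 0 < q)
    {N : V → ℝ≥0∞} (hN : ContainsLinftyUniformly N) (T : V → E) (M c : ℝ) :
    ¬ IsNormEmbedding N T M c := by
  intro hT
  obtain ⟨K, hK⟩ := hE
  obtain ⟨C, hC⟩ := hN
  obtain ⟨n, hn⟩ := exists_nat_gt ((K * (M.toNNReal * C)) ^ q / c ^ q)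
  obtain ⟨x, hx1, hx⟩ := hC n
  obtain ⟨ε, hε, hle⟩ := hK n fun k => T (x k)
  have hc := hT.pos
  have hxk : ∀ k, N (x k) < ⊤ := fun k =>
    (norm_le_of_forall_abs_le_one hx k).trans_lt ENNReal.coe_lt_top
  have hcount : n * c ^ q ≤ (K * (M.toNNReal * C)) ^ q :=
    calc n * c ^ q = ∑ _k : Fin n, c ^ q := by simp
      _ ≤ ∑ k, ‖T (x k)‖ ^ q := by
          gcongr with k
          exact hT.le_norm_apply (hxk k) (hx1 k)
      _ ≤ (K * ‖∑ k, ε k • T (x k)‖) ^ q := hle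
      _ ≤ (K * (M.toNNReal * C)) ^ q := by
          have hε1 : ∀ k, |ε k| ≤ 1 := fun k => (hε k).le
          rw [← hT.map_sum_smul hx hε1]
          gcongr
          exact hT.norm_apply_le (hx ε hε1)
  rw [div_lt_iff₀ (by positivity)] at hn
  exact hcount.not_gt hn

end OrliczProperty

section Lp

variable {H : Type*} [NormedAddCommGroup H] [InnerProductSpace ℝ H]

theorem two_mul_norm_rpow_add_le {p : ℝ} (hp : 2 ≤ p) (a b : H) :
    2 * (‖a‖ ^ p + ‖b‖ ^ p) ≤ ‖a + b‖ ^ p + ‖a - b‖ ^ p := by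
  -- The parallelogram law, with convexity and superadditivity of `t ↦ t ^ (p / 2)`.
  have hq : 1 ≤ p / 2 := by linarith
  have rpow_eq : ∀ x : H, ‖x‖ ^ p = (‖x‖ ^ 2) ^ (p / 2) := fun x => by
    rw [← Real.rpow_natCast_mul (norm_nonneg x)]
    congr 1
    push_cast
    ring
  simp only [rpow_eq]
  have convex := (convexOn_rpow hq).2 (sq_nonneg ‖a + b‖) (sq_nonneg ‖a - b‖)
    (by norm_num : (0 : ℝ) ≤ 1 / 2) (by norm_num : (0 : ℝ) ≤ 1 / 2) (by norm_num)
  have mean : 1 / 2 * ‖a + b‖ ^ 2 + 1 / 2 * ‖a - b‖ ^ 2 = ‖a‖ ^ 2 + ‖b‖ ^ 2 := by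
    linear_combination 1 / 2 * parallelogram_law_with_norm ℝ a b
  simp only [smul_eq_mul, mean] at convex
  have superadd := Real.add_rpow_le_rpow_add (sq_nonneg ‖a‖) (sq_nonneg ‖b‖) hq
  linarith

variable {X : Type*} [MeasurableSpace X] {μ : Measure X} {p : ℝ≥0∞}

theorem Lp_norm_rpow_eq_integral {G : Type*} [NormedAddCommGroup G] (hp0 : p ≠ 0) (hp : p ≠ ∞)
    (f : Lp G p μ) : ‖f‖ ^ p.toReal = ∫ t, ‖f t‖ ^ p.toReal ∂μ := by
  rw [Lp.norm_def, (Lp.memLp f).eLpNorm_eq_integral_rpow_norm hp0 hp,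
    ENNReal.toReal_ofReal (by positivity),
    Real.rpow_inv_rpow (by positivity) (ENNReal.toReal_pos hp0 hp).ne']

theorem Lp_two_mul_norm_rpow_add_le (hp2 : 2 ≤ p) (hp : p ≠ ∞) (f g : Lp H p μ) :
    2 * (‖f‖ ^ p.toReal + ‖g‖ ^ p.toReal) ≤ ‖f + g‖ ^ p.toReal + ‖f - g‖ ^ p.toReal := by
  have hp0 : p ≠ 0 := (zero_lt_two.trans_le hp2).ne'
  have hp2' : 2 ≤ p.toReal := (ENNReal.ofReal_le_iff_le_toReal hp).1 (by simpa using hp2)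
  have integrable : ∀ h : Lp H p μ, Integrable (fun t => ‖h t‖ ^ p.toReal) μ := fun h =>
    (Lp.memLp h).integrable_norm_rpow hp0 hp
  simp only [Lp_norm_rpow_eq_integral hp0 hp]
  rw [← integral_add (integrable f) (integrable g), ← integral_const_mul,
    ← integral_add (integrable _) (integrable _)]
  refine integral_mono_ae (((integrable f).add (integrable g)).const_mul 2)
    ((integrable _).add (integrable _)) ?_
  filter_upwards [Lp.coeFn_add f g, Lp.coeFn_sub f g] with t hadd hsub
  rw [hadd, hsub]
  exact two_mul_norm_rpow_add_le hp2' (f t) (g t)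

theorem hasOrliczProperty_Lp [Fact (1 ≤ p)] (hp2 : 2 ≤ p) (hp : p ≠ ∞) :
    HasOrliczProperty (Lp H p μ) p.toReal := by
  refine ⟨1, fun n f => ?_⟩
  simp only [NNReal.coe_one, one_mul]
  induction n with
  | zero => exact ⟨0, by simp, by simp [Real.rpow_nonneg]⟩
  | succ n ih =>
    obtain ⟨ε, hε, hle⟩ := ih fun k => f k.succ
    have clarkson := Lp_two_mul_norm_rpow_add_le hp2 hp (∑ k, ε k • f k.succ) (f 0)
    obtain ⟨r, hr, hr_le⟩ : ∃ r : ℝ, |r| = 1 ∧ ‖f 0‖ ^ p.toReal + ∑ k : Fin n,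
        ‖f k.succ‖ ^ p.toReal ≤ ‖r • f 0 + ∑ k, ε k • f k.succ‖ ^ p.toReal := by
      by_contra! h
      have hplus := h 1 (by simp)
      have hminus := h (-1) (by simp)
      rw [one_smul, add_comm (f 0)] at hplus
      rw [neg_one_smul, neg_add_eq_sub] at hminus
      linarith
    refine ⟨Fin.cons r ε, Fin.cases hr hε, ?_⟩
    simpa only [Fin.sum_univ_succ, Fin.cons_zero, Fin.cons_succ] using hr_le

end Lp

section EllNorm

/-- The `ℓ_p` norm, valued in `[0,∞]`, of a family of elements of `[0,∞]`. It allows to write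
`pwNorm` as a mixed `ℓ_p(ℓ_2)` norm. -/
def ellNorm {ι : Type*} (p : ℝ) (f : ι → ℝ≥0∞) : ℝ≥0∞ :=
  (∑' j, f j ^ p) ^ (1 / p)

variable {ι κ : Type*} {p q : ℝ}

theorem ellNorm_rpow (hp : p ≠ 0) (f : ι → ℝ≥0∞) : ellNorm p f ^ p = ∑' j, f j ^ p := by
  rw [ellNorm, one_div, ENNReal.rpow_inv_rpow hp]

theorem ellNorm_mono (hp : 0 ≤ p) {f g : ι → ℝ≥0∞} (h : f ≤ g) : ellNorm p f ≤ ellNorm p g := by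
  unfold ellNorm
  gcongr with j
  exact h j

theorem ellNorm_add_le (hp : 1 ≤ p) (f g : ι → ℝ≥0∞) :
    ellNorm p (f + g) ≤ ellNorm p f + ellNorm p g := by
  let _ : MeasurableSpace ι := ⊤
  have h := ENNReal.lintegral_Lp_add_le (μ := Measure.count) (f := f) (g := g)
    measurable_from_top.aemeasurable measurable_from_top.aemeasurable hp
  simpa only [lintegral_count, ellNorm] using h

theorem ellNorm_const [Fintype ι] (hp : 0 < p) (c : ℝ≥0∞) :
    ellNorm p (fun _ : ι => c) = (Fintype.card ι : ℝ≥0∞) ^ (1 / p) * c := by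
  rw [ellNorm, tsum_fintype, Finset.sum_const, Finset.card_univ, nsmul_eq_mul,
    ENNReal.mul_rpow_of_nonneg _ _ (by positivity), one_div, ENNReal.rpow_rpow_inv hp.ne']

theorem le_ellNorm (hp : 0 < p) (f : ι → ℝ≥0∞) (j : ι) : f j ≤ ellNorm p f := by
  rw [ellNorm, one_div, ENNReal.le_rpow_inv_iff hp]
  exact ENNReal.le_tsum j

theorem ellNorm_comp_of_injective (hp : 0 < p) {e : κ → ι} (he : Function.Injective e)
    {f : ι → ℝ≥0∞} (hf : Function.support f ⊆ Set.range e) : ellNorm p (f ∘ e) = ellNorm p f := by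
  unfold ellNorm
  congr 1
  exact he.tsum_eq (f := fun j => f j ^ p) fun j hj => hf fun h0 => hj (by simp [h0, hp])

theorem tsum_rpow_le_rpow_tsum (hq : 1 ≤ q) (f : ι → ℝ≥0∞) :
    ∑' j, f j ^ q ≤ (∑' j, f j) ^ q := by
  have split : ∀ s : ℝ≥0∞, s ^ q = s * s ^ (q - 1) := fun s => by
    nth_rewrite 2 [← ENNReal.rpow_one s]
    rw [← ENNReal.rpow_add_of_nonneg _ _ zero_le_one (sub_nonneg.2 hq), add_sub_cancel]
  rw [split (∑' j, f j), ← ENNReal.tsum_mul_right]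
  refine ENNReal.tsum_le_tsum fun j => ?_
  rw [split (f j)]
  gcongr
  exact ENNReal.le_tsum j

theorem ellNorm_antitone_exponent (hq : 0 < q) (hqp : q ≤ p) (f : ι → ℝ≥0∞) :
    ellNorm p f ≤ ellNorm q f := by
  have hp : 0 < p := hq.trans_le hqp
  have h := tsum_rpow_le_rpow_tsum ((one_le_div hq).2 hqp) fun j => f j ^ q
  simp only [← ENNReal.rpow_mul, mul_div_cancel₀ p hq.ne'] at h
  rw [ellNorm, one_div, ENNReal.rpow_inv_le_iff hp, ellNorm, ← ENNReal.rpow_mul,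
    one_div_mul_eq_div]
  exact h

theorem ellNorm_eq_of_support_subsingleton (hp : 0 < p) (hq : 0 < q) {f : ι → ℝ≥0∞}
    (hf : (Function.support f).Subsingleton) : ellNorm p f = ellNorm q f := by
  have ellNorm_eq : ∀ r > 0, ellNorm r f = ∑' j : Function.support f, f j := fun r hr => by
    have := hf.coe_sort
    rw [← ellNorm_comp_of_injective hr Subtype.val_injective Subtype.range_coe.superset]
    cases isEmpty_or_nonempty (Function.support f) with
    | inl _ => simp [ellNorm, hr]
    | inr h =>
      have := uniqueOfSubsingleton h.some
      simp [ellNorm, hr.ne']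
  rw [ellNorm_eq p hp, ellNorm_eq q hq]

theorem ellNorm_cells_le (hp : 0 < p) {P : Set (Set ι)} (hP : P.PairwiseDisjoint id)
    (f : ι → ℝ≥0∞) : (ellNorm p fun N : P => ellNorm p fun j : N.1 => f j) ≤ ellNorm p f := by
  have hinj : Function.Injective fun a : Σ N : P, N.1 => (a.2 : ι) := by
    rintro ⟨⟨A, hA⟩, ⟨a, ha⟩⟩ ⟨⟨B, hB⟩, ⟨b, hb⟩⟩ hab
    obtain rfl : a = b := hab
    obtain rfl : A = B := hP.elim_set hA hB a ha hb
    rfl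
  rw [ellNorm]
  simp only [ellNorm_rpow hp.ne']
  rw [← ENNReal.tsum_sigma' fun a : Σ N : P, N.1 => f a.2 ^ p, ellNorm]
  gcongr
  exact ENNReal.tsum_comp_le_tsum_of_injective hinj fun j => f j ^ p

end EllNorm

section PwNorm

variable {p : ℝ} {P : Set (Set α)}

theorem pwNorm_eq_ellNorm (p : ℝ) (P : Set (Set α)) (W x : α → ℝ) :
    pwNorm p P W x = ellNorm p fun N : P => ellNorm 2 fun j : N.1 => ‖x j * W j‖ₑ := by
  have sq : ∀ t : ℝ, ‖t‖ₑ ^ (2 : ℝ) = ENNReal.ofReal (t ^ 2) := fun t => by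
    rw [← ofReal_norm, ENNReal.ofReal_rpow_of_nonneg (norm_nonneg t) zero_le_two, Real.rpow_two,
      Real.norm_eq_abs, sq_abs]
  simp only [pwNorm, ellNorm, sq, mul_pow, ← ENNReal.rpow_mul, one_div_mul_eq_div]

theorem pwNorm_zero (hp : 0 < p) (P : Set (Set α)) (W : α → ℝ) : pwNorm p P W 0 = 0 := by
  simp [pwNorm, hp]

theorem pwNorm_add_le (hp : 1 ≤ p) (P : Set (Set α)) (W x y : α → ℝ) :
    pwNorm p P W (x + y) ≤ pwNorm p P W x + pwNorm p P W y := by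
  simp only [pwNorm_eq_ellNorm]
  refine (ellNorm_mono (by linarith) fun N => ?_).trans (ellNorm_add_le hp _ _)
  refine (ellNorm_mono zero_le_two fun j => ?_).trans (ellNorm_add_le one_le_two _ _)
  rw [Pi.add_apply, add_mul]
  exact enorm_add_le _ _

theorem pwNorm_sum_le {ι : Type*} (hp : 1 ≤ p) (P : Set (Set α)) (W : α → ℝ) (s : Finset ι)
    (x : ι → α → ℝ) : pwNorm p P W (∑ k ∈ s, x k) ≤ ∑ k ∈ s, pwNorm p P W (x k) :=
  Finset.le_sum_of_subadditive _ (pwNorm_zero (by linarith) P W).le (pwNorm_add_le hp P W) s x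

theorem pwNorm_mono (hp : 0 ≤ p) (P : Set (Set α)) (W : α → ℝ) {x y : α → ℝ}
    (h : ∀ j, |x j| ≤ |y j|) : pwNorm p P W x ≤ pwNorm p P W y := by
  simp only [pwNorm_eq_ellNorm]
  refine ellNorm_mono hp fun N => ellNorm_mono zero_le_two fun j => ?_
  simp only [enorm_mul]
  gcongr
  exact enorm_le_iff_norm_le.2 (h j)

theorem pwNorm_smul_le (hp : 0 ≤ p) (P : Set (Set α)) (W x : α → ℝ) {r : ℝ} (hr : |r| ≤ 1) :
    pwNorm p P W (r • x) ≤ pwNorm p P W x :=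
  pwNorm_mono hp P W fun j => by
    rw [Pi.smul_apply, smul_eq_mul, abs_mul]
    exact mul_le_of_le_one_left (abs_nonneg _) hr

theorem pwNorm_le_ellNorm_two (hp : 2 ≤ p) (hP : P.PairwiseDisjoint id) (W x : α → ℝ) :
    pwNorm p P W x ≤ ellNorm 2 fun j => ‖x j * W j‖ₑ := by
  rw [pwNorm_eq_ellNorm]
  exact (ellNorm_antitone_exponent two_pos hp _).trans
    (ellNorm_cells_le two_pos hP fun j => ‖x j * W j‖ₑ)

theorem pwNorm_le_ellNorm_of_subsingleton (hp : 0 < p) (hP : P.PairwiseDisjoint id)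
    (W x : α → ℝ) (hx : ∀ N ∈ P, (N ∩ Function.support x).Subsingleton) :
    pwNorm p P W x ≤ ellNorm p fun j => ‖x j * W j‖ₑ := by
  rw [pwNorm_eq_ellNorm]
  refine (ellNorm_mono hp.le fun N => ?_).trans (ellNorm_cells_le hp hP fun j => ‖x j * W j‖ₑ)
  refine (ellNorm_eq_of_support_subsingleton two_pos hp ?_).le
  have mem_support : ∀ j : N.1, ‖x j * W j‖ₑ ≠ 0 → (j : α) ∈ N.1 ∩ Function.support x :=
    fun j hj => ⟨j.2, fun h0 => hj (by simp [h0])⟩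
  exact fun i hi j hj => Subtype.ext (hx N N.2 (mem_support i hi) (mem_support j hj))

theorem ellNorm_two_le_pwNorm_of_support_subset (hp : 0 < p) {A : Set α} (hA : A ∈ P)
    (W : α → ℝ) {x : α → ℝ} (hx : Function.support x ⊆ A) :
    (ellNorm 2 fun j => ‖x j * W j‖ₑ) ≤ pwNorm p P W x := by
  have hsupp : Function.support (fun j => ‖x j * W j‖ₑ) ⊆ Set.range ((↑) : A → α) := fun j hj => by
    rw [Subtype.range_coe]
    exact hx fun h0 => hj (by simp [h0])
  rw [pwNorm_eq_ellNorm, ← ellNorm_comp_of_injective two_pos Subtype.val_injective hsupp]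
  exact le_ellNorm hp (fun N : P => ellNorm 2 fun j : N.1 => ‖x j * W j‖ₑ) ⟨A, hA⟩

end PwNorm

section YZNorm

theorem PI_pairwiseDisjoint {n : ℕ} (I : Finset (Fin n)) : (PI I).PairwiseDisjoint id := by
  rintro _ ⟨g, rfl⟩ _ ⟨h, rfl⟩ hne
  refine Set.disjoint_left.2 fun i hg hh => hne ?_
  have hgh : ∀ k ∈ I, g k = h k := fun k hk => (hg k hk).symm.trans (hh k hk)
  ext j
  exact forall₂_congr fun k hk => by rw [hgh k hk]

theorem Ynorm_eq_iSup (p : ℝ) (w : ℕ → ℝ) (n : ℕ) (x : BIdx n → ℝ) :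
    Ynorm p w n x = ⨆ I : Finset (Fin n), pwNorm p (PI I) (WI w I) x := by
  simp only [Ynorm, famNorm, famYn, iSup_range]

theorem Znorm_single {p : ℝ} (hp : 0 < p) (w : ℕ → ℝ) (n : ℕ) (x : BIdx n → ℝ) :
    Znorm p w (Pi.single n x) = Ynorm p w n x := by
  rw [Znorm, tsum_eq_single n]
  · rw [Pi.single_eq_same, one_div, ENNReal.rpow_rpow_inv hp.ne']
  · intro k hk
    simp [Pi.single_eq_of_ne hk, Ynorm_eq_iSup, pwNorm_zero hp, hp]

end YZNorm

section AxisVec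

/-- The point `(m,l)` on the `k`-th axis through the base point `((m,0),…,(m,0))`. -/
def axisPt {n : ℕ} (m : ℕ) (k : Fin n) (l : ℕ) : BIdx n :=
  Function.update (fun _ => (m, 0)) k (m, l)

/-- The vector taking the value `a` at the first `N` points of the `k`-th axis, which plays the role
of the `k`-th unit vector of `ℓ_∞^n`. -/
def axisVec {n : ℕ} (m N : ℕ) (a : ℝ) (k : Fin n) : BIdx n → ℝ :=
  (Set.range fun l : Fin N => axisPt m k l).indicator fun _ => a

variable {p a : ℝ} {w : ℕ → ℝ} {n m N : ℕ}

theorem axisPt_injective (m : ℕ) (k : Fin n) : Function.Injective (axisPt m k) := by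
  intro l l' h
  simpa [axisPt] using congrFun h k

theorem WI_axisPt (w : ℕ → ℝ) (I : Finset (Fin n)) (m : ℕ) (k : Fin n) (l : ℕ) :
    WI w I (axisPt m k l) = w m ^ Iᶜ.card := by
  have hfst : ∀ j, (axisPt m k l j).1 = m := fun j => by
    rcases eq_or_ne j k with rfl | hj <;> simp_all [axisPt]
  simp [WI, hfst]

theorem support_axisVec_subset (m N : ℕ) (a : ℝ) (k : Fin n) :
    Function.support (axisVec m N a k) ⊆ Set.range fun l : Fin N => axisPt m k l :=
  Set.support_indicator_subset

theorem ellNorm_axisVec {q : ℝ} (hq : 0 < q) (ha : 0 ≤ a) (hw : 0 ≤ w m) (I : Finset (Fin n))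
    (k : Fin n) : (ellNorm q fun i => ‖axisVec m N a k i * WI w I i‖ₑ) =
      ENNReal.ofReal ((N : ℝ) ^ (1 / q) * (a * w m ^ Iᶜ.card)) := by
  have hsupp : Function.support (fun i => ‖axisVec m N a k i * WI w I i‖ₑ) ⊆
      Set.range fun l : Fin N => axisPt m k l := fun i hi =>
    support_axisVec_subset m N a k fun h0 => hi (by simp [h0])
  have hinj : Function.Injective fun l : Fin N => axisPt m k l :=
    (axisPt_injective m k).comp Fin.val_injective
  have hconst : (fun i => ‖axisVec m N a k i * WI w I i‖ₑ) ∘ (fun l : Fin N => axisPt m k l) =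
      fun _ => ENNReal.ofReal (a * w m ^ Iᶜ.card) := funext fun l => by
    simp only [Function.comp_apply, axisVec, Set.indicator_of_mem (Set.mem_range_self l),
      WI_axisPt]
    exact Real.enorm_eq_ofReal (by positivity)
  rw [← ellNorm_comp_of_injective hq hinj hsupp, hconst, ellNorm_const hq, Fintype.card_fin,
    ENNReal.ofReal_mul (by positivity : (0 : ℝ) ≤ (N : ℝ) ^ (1 / q)),
    ← ENNReal.ofReal_rpow_of_nonneg N.cast_nonneg (by positivity), ENNReal.ofReal_natCast]

theorem pwNorm_axisVec_le_of_mem (hp : 0 < p) (ha : 0 ≤ a) (hw : 0 ≤ w m) {I : Finset (Fin n)}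
    {k : Fin n} (hk : k ∈ I) : pwNorm p (PI I) (WI w I) (axisVec m N a k) ≤
      ENNReal.ofReal ((N : ℝ) ^ (1 / p) * (a * w m ^ Iᶜ.card)) := by
  rw [← ellNorm_axisVec hp ha hw]
  refine pwNorm_le_ellNorm_of_subsingleton hp (PI_pairwiseDisjoint I) _ _ ?_
  rintro _ ⟨g, rfl⟩ i ⟨hi, hi'⟩ j ⟨hj, hj'⟩
  obtain ⟨l, rfl⟩ := support_axisVec_subset m N a k hi'
  obtain ⟨l', rfl⟩ := support_axisVec_subset m N a k hj'
  have hll' : (l : ℕ) = l' := by simpa [axisPt] using (hi k hk).trans (hj k hk).symm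
  simp only [hll']

theorem pwNorm_axisVec_le (hp : 2 ≤ p) (ha : 0 ≤ a) (hw : 0 ≤ w m) (I : Finset (Fin n))
    (k : Fin n) : pwNorm p (PI I) (WI w I) (axisVec m N a k) ≤
      ENNReal.ofReal ((N : ℝ) ^ (1 / 2 : ℝ) * (a * w m ^ Iᶜ.card)) :=
  (pwNorm_le_ellNorm_two hp (PI_pairwiseDisjoint I) _ _).trans_eq
    (ellNorm_axisVec two_pos ha hw I k)

theorem le_pwNorm_compl_singleton_axisVec (hp : 0 < p) (ha : 0 ≤ a) (hw : 0 ≤ w m) (k : Fin n) :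
    ENNReal.ofReal ((N : ℝ) ^ (1 / 2 : ℝ) * (a * w m)) ≤
      pwNorm p (PI {k}ᶜ) (WI w {k}ᶜ) (axisVec m N a k) := by
  have hcell : {i : BIdx n | ∀ j ∈ ({k}ᶜ : Finset (Fin n)), i j = (m, 0)} ∈ PI {k}ᶜ :=
    ⟨fun _ => (m, 0), rfl⟩
  have hell := ellNorm_axisVec (N := N) two_pos ha hw {k}ᶜ k
  rw [compl_compl, Finset.card_singleton, pow_one] at hell
  rw [← hell]
  refine ellNorm_two_le_pwNorm_of_support_subset hp hcell _ ?_
  refine (support_axisVec_subset m N a k).trans ?_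
  rintro _ ⟨l, rfl⟩ j hj
  exact Function.update_of_ne (by simpa using hj) _ _

theorem one_le_Ynorm_axisVec (hp : 0 < p) (ha : 0 ≤ a) (hw : 0 ≤ w m)
    (haN : (N : ℝ) ^ (1 / 2 : ℝ) * (a * w m) = 1) (k : Fin n) :
    1 ≤ Ynorm p w n (axisVec m N a k) := by
  rw [Ynorm_eq_iSup, ← ENNReal.ofReal_one, ← haN]
  exact le_iSup_of_le {k}ᶜ (le_pwNorm_compl_singleton_axisVec hp ha hw k)

theorem pwNorm_axisVec_le_ite_add (hp : 2 ≤ p) (hw : IsWeight w) {δ : ℝ} (ha : 0 ≤ a)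
    (haN : (N : ℝ) ^ (1 / 2 : ℝ) * (a * w m) = 1) (hwδ : w m ≤ δ)
    (haδ : (N : ℝ) ^ (1 / p) * a ≤ δ) (I : Finset (Fin n)) (k : Fin n) :
    pwNorm p (PI I) (WI w I) (axisVec m N a k) ≤
      (if Iᶜ = {k} then 1 else 0) + ENNReal.ofReal δ := by
  obtain ⟨hw0, hw1⟩ := hw m
  by_cases hk : k ∈ I
  · refine le_add_left ((pwNorm_axisVec_le_of_mem (by linarith) ha hw0.le hk).trans ?_)
    refine ENNReal.ofReal_le_ofReal (le_trans ?_ haδ)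
    gcongr
    exact mul_le_of_le_one_right ha (pow_le_one₀ hw0.le hw1)
  · have hkc : k ∈ Iᶜ := Finset.mem_compl.2 hk
    refine (pwNorm_axisVec_le hp ha hw0.le I k).trans ?_
    split_ifs with hI
    · rw [hI, Finset.card_singleton, pow_one, haN, ENNReal.ofReal_one]
      exact le_self_add
    · refine le_add_left (ENNReal.ofReal_le_ofReal ?_)
      have hcard : 2 ≤ Iᶜ.card := by
        by_contra! hlt
        exact hI (Finset.eq_singleton_iff_unique_mem.2
          ⟨hkc, fun j hj => Finset.card_le_one.1 (by lia) j hj k hkc⟩)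
      calc (N : ℝ) ^ (1 / 2 : ℝ) * (a * w m ^ Iᶜ.card)
          ≤ (N : ℝ) ^ (1 / 2 : ℝ) * (a * w m ^ 2) := by
            gcongr ?_ * (?_ * ?_)
            exact pow_le_pow_of_le_one hw0.le hw1 hcard
        _ = w m := by linear_combination w m * haN
        _ ≤ δ := hwδ

theorem Ynorm_sum_smul_axisVec_le_two (hp : 2 ≤ p) (hw : IsWeight w) {δ : ℝ} (ha : 0 ≤ a)
    (haN : (N : ℝ) ^ (1 / 2 : ℝ) * (a * w m) = 1) (hwδ : w m ≤ δ)
    (haδ : (N : ℝ) ^ (1 / p) * a ≤ δ) (hnδ : n * δ ≤ 1) {b : Fin n → ℝ} (hb : ∀ k, |b k| ≤ 1) :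
    Ynorm p w n (∑ k, b k • axisVec m N a k) ≤ 2 := by
  rw [Ynorm_eq_iSup]
  refine iSup_le fun I => ?_
  have hexceptional : (∑ k, if Iᶜ = {k} then 1 else 0 : ℝ≥0∞) ≤ 1 := by
    by_cases h : ∃ k, Iᶜ = {k}
    · obtain ⟨k, hk⟩ := h
      simp [hk]
    · push Not at h
      simp [h]
  calc pwNorm p (PI I) (WI w I) (∑ k, b k • axisVec m N a k)
      ≤ ∑ k, pwNorm p (PI I) (WI w I) (b k • axisVec m N a k) :=
        pwNorm_sum_le (by linarith) _ _ _ _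
    _ ≤ ∑ k, ((if Iᶜ = {k} then 1 else 0) + ENNReal.ofReal δ) := by
        gcongr with k
        exact (pwNorm_smul_le (by linarith) _ _ _ (hb k)).trans
          (pwNorm_axisVec_le_ite_add hp hw ha haN hwδ haδ I k)
    _ = (∑ k, if Iᶜ = {k} then 1 else 0) + ENNReal.ofReal (n * δ) := by
        rw [Finset.sum_add_distrib, Finset.sum_const, Finset.card_univ, Fintype.card_fin,
          nsmul_eq_mul, ENNReal.ofReal_mul n.cast_nonneg, ENNReal.ofReal_natCast]
    _ ≤ 1 + 1 := add_le_add hexceptional (ENNReal.ofReal_le_one.2 hnδ)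
    _ = 2 := one_add_one_eq_two

end AxisVec

theorem exists_nat_rpow_mul_eq_one_and_rpow_mul_le {s t u δ : ℝ} (hst : s < t) (hu : 0 < u)
    (hδ : 0 < δ) : ∃ (N : ℕ) (a : ℝ), 0 ≤ a ∧ (N : ℝ) ^ t * (a * u) = 1 ∧ (N : ℝ) ^ s * a ≤ δ := by
  have hlim : Tendsto (fun N : ℕ => (N : ℝ) ^ (-(t - s))) atTop (nhds 0) :=
    (tendsto_rpow_neg_atTop (sub_pos.2 hst)).comp tendsto_natCast_atTop_atTop
  obtain ⟨N, hN, hN1⟩ :=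
    ((hlim.eventually_lt_const (mul_pos hδ hu)).and (eventually_ge_atTop 1)).exists
  have hN0 : (0 : ℝ) < N := by exact_mod_cast hN1
  refine ⟨N, (N : ℝ) ^ (-t) / u, by positivity, ?_, ?_⟩
  · rw [div_mul_cancel₀ _ hu.ne', ← Real.rpow_add hN0, add_neg_cancel, Real.rpow_zero]
  · rw [← mul_div_assoc, ← Real.rpow_add hN0, ← sub_eq_add_neg, div_le_iff₀ hu]
    simpa only [neg_sub] using hN.le

theorem containsLinftyUniformly_Znorm {p : ℝ} (hp : 2 < p) {w : ℕ → ℝ} (hw : IsWeight w)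
    (hw0 : ∀ δ > 0, ∃ m, w m < δ) : ContainsLinftyUniformly (Znorm p w) := by
  refine ⟨2, fun n => ?_⟩
  have hp0 : 0 < p := by linarith
  obtain ⟨δ, hδ, hnδ⟩ : ∃ δ > 0, n * δ ≤ (1 : ℝ) :=
    ⟨1 / (n + 1), by positivity, by rw [mul_one_div, div_le_one (by positivity)]; linarith⟩
  obtain ⟨m, hm⟩ := hw0 δ hδ
  obtain ⟨N, a, ha, haN, haδ⟩ := exists_nat_rpow_mul_eq_one_and_rpow_mul_le
    (one_div_lt_one_div_of_lt two_pos hp) (hw m).1 hδ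
  refine ⟨fun k => Pi.single n (axisVec m N a k), fun k => ?_, fun b hb => ?_⟩
  · rw [Znorm_single hp0]
    exact one_le_Ynorm_axisVec hp0 ha (hw m).1.le haN k
  · have hsingle : ∑ k, b k • Pi.single n (axisVec m N a k) =
        (Pi.single n (∑ k, b k • axisVec m N a k) : ∀ n : ℕ, BIdx n → ℝ) := by
      have h := map_sum (LinearMap.single ℝ (fun n : ℕ => BIdx n → ℝ) n)
        (fun k => b k • axisVec m N a k) Finset.univ
      simp only [map_smul, LinearMap.single_apply] at h
      exact h.symm
    rw [hsingle, Znorm_single hp0]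
    exact Ynorm_sum_smul_axisVec_le_two hp.le hw ha haN hm.le haδ hnδ hb

theorem statement19_general {E : Type*} [SeminormedAddCommGroup E] [NormedSpace ℝ E] {q : ℝ}
    (hq : 0 < q) (hE : HasOrliczProperty E q) {p : ℝ} (hp : 2 < p) {w : ℕ → ℝ} (hw : IsWeight w)
    (hw0 : ∀ δ > 0, ∃ m, w m < δ) :
    ¬ ∃ (T : (∀ n : ℕ, BIdx n → ℝ) → E) (M c : ℝ), IsNormEmbedding (Znorm p w) T M c :=
  fun ⟨T, M, c, hT⟩ => hE.not_isNormEmbedding hq (containsLinftyUniformly_Znorm hp hw hw0) T M c hT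

/-- The `ℓ_p`-sum `Z = (Σ_n Y_n)_{ℓ_p}` is not isomorphic to a
subspace of `L_p[0,1]`: there is no linear map `T : Z → L_p([0,1])` which is bounded
(by some `M`) and bounded below (by some `c > 0`). -/
theorem statement19 (p : ℝ) (hp : 2 < p) [Fact (1 ≤ ENNReal.ofReal p)]
    (w : ℕ → ℝ) (hw : IsWeight w)
    (hw0 : Filter.Tendsto w Filter.atTop (nhds 0)) :
    ¬ ∃ (T : (∀ n : ℕ, BIdx n → ℝ) → MeasureTheory.Lp ℝ (ENNReal.ofReal p)
        (volume : Measure ↥(Set.Icc (0 : ℝ) 1))) (M c : ℝ), 0 < c ∧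
      (∀ x y, Znorm p w x < ⊤ → Znorm p w y < ⊤ → T (x + y) = T x + T y) ∧
      (∀ (r : ℝ) (x), Znorm p w x < ⊤ → T (r • x) = r • T x) ∧
      (∀ x, Znorm p w x < ⊤ →
        ENNReal.ofReal ‖T x‖ ≤ ENNReal.ofReal M * Znorm p w x) ∧
      (∀ x, Znorm p w x < ⊤ →
        ENNReal.ofReal c * Znorm p w x ≤ ENNReal.ofReal ‖T x‖) := by
  have hp2 : 2 ≤ ENNReal.ofReal p := by simpa using hp.le
  have hp0 : 0 < (ENNReal.ofReal p).toReal :=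
    ENNReal.toReal_pos (zero_lt_two.trans_le hp2).ne' ENNReal.ofReal_ne_top
  rintro ⟨T, M, c, hc, hadd, hsmul, hupper, hlower⟩
  exact statement19_general hp0 (hasOrliczProperty_Lp hp2 ENNReal.ofReal_ne_top) hp hw
    (fun δ hδ => (hw0.eventually_lt_const hδ).exists) ⟨T, M, c, hc, hadd, hsmul, hupper, hlower⟩
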